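/- Let ν be a lattice path. For every ν-path μ, the bracket vector of the ν-tree obtained by right flushing equals the bracket vector of μ: b(R(μ)) = b(μ). -/

import Mathlib

open scoped Classical

/-! Lattice paths: `true` = north step, `false` = east step. -/

def eastSteps (ν : List Bool) : ℕ := ν.count false
def northSteps (ν : List Bool) : ℕ := ν.count true

/-- Height at which the path first reaches abscissa `x`. -/
def heightAt : List Bool → ℕ → ℕ
  | _, 0 => 0
  | [], _ + 1 => 0
  | true :: rest, x + 1 => heightAt rest (x + 1) + 1
  | false :: rest, x + 1 => heightAt rest x

/-- Lattice point of a path after `i` steps. -/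
def pointAt (μ : List Bool) (i : ℕ) : ℕ × ℕ :=
  ((μ.take i).count false, (μ.take i).count true)

/-- The set `A_ν` of lattice points weakly above `ν`. -/
def APts (ν : List Bool) : Set (ℕ × ℕ) :=
  {p | p.1 ≤ eastSteps ν ∧ heightAt ν p.1 ≤ p.2 ∧ p.2 ≤ northSteps ν}

def Incompatible (ν : List Bool) (p q : ℕ × ℕ) : Prop :=
  (p.1 < q.1 ∧ p.2 < q.2 ∧ (q.1, p.2) ∈ APts ν) ∨
    (q.1 < p.1 ∧ q.2 < p.2 ∧ (p.1, q.2) ∈ APts ν)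

def Compatible (ν : List Bool) (p q : ℕ × ℕ) : Prop := ¬ Incompatible ν p q

def IsNuTree (ν : List Bool) (T : Set (ℕ × ℕ)) : Prop :=
  T ⊆ APts ν ∧ T.Pairwise (Compatible ν) ∧
    ∀ T', T' ⊆ APts ν → T'.Pairwise (Compatible ν) → T ⊆ T' → T' = T

def IsRightRotationAt (T T' : Set (ℕ × ℕ)) (q q' : ℕ × ℕ) : Prop :=
  ∃ x y x'' y', q = (x, y) ∧ q' = (x'', y') ∧ x < x'' ∧ y < y' ∧
    (x, y) ∈ T ∧ (x, y') ∈ T ∧ (x'', y) ∈ T ∧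
    (∀ b, y < b → b < y' → (x, b) ∉ T) ∧
    (∀ a, x < a → a < x'' → (a, y) ∉ T) ∧
    (∀ a, x < a → a < x'' → (a, y') ∉ T) ∧
    (∀ b, y < b → b < y' → (x'', b) ∉ T) ∧
    T' = (T \ {(x, y)}) ∪ {(x'', y')}

def IsRightRotation (T T' : Set (ℕ × ℕ)) : Prop :=
  ∃ q q', IsRightRotationAt T T' q q'

/-- Order relation of the rotation poset of ν-trees. -/
def TreeLE (ν : List Bool) : Set (ℕ × ℕ) → Set (ℕ × ℕ) → Prop :=
  Relation.ReflTransGen fun A B => IsNuTree ν A ∧ IsNuTree ν B ∧ IsRightRotation A B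

def IsNuPath (ν μ : List Bool) : Prop :=
  eastSteps μ = eastSteps ν ∧ northSteps μ = northSteps ν ∧
    ∀ i ≤ μ.length, pointAt μ i ∈ APts ν

noncomputable def horiz (ν : List Bool) (p : ℕ × ℕ) : ℕ :=
  sSup {k | (p.1 + k, p.2) ∈ APts ν}

/-- Covering relation of the ν-Tamari lattice. -/
def TamariCover (ν μ μ' : List Bool) : Prop :=
  IsNuPath ν μ ∧ IsNuPath ν μ' ∧
    ∃ i j, 0 < i ∧ i < j ∧ j ≤ μ.length ∧
      μ.getD (i - 1) true = false ∧ μ.getD i false = true ∧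
      horiz ν (pointAt μ j) = horiz ν (pointAt μ i) ∧
      (∀ k, i < k → k < j → horiz ν (pointAt μ k) ≠ horiz ν (pointAt μ i)) ∧
      μ' = μ.take (i - 1) ++ (μ.drop i).take (j - i) ++ [false] ++ μ.drop j

def TamariLE (ν : List Bool) : List Bool → List Bool → Prop :=
  Relation.ReflTransGen (TamariCover ν)

/-! Flushing maps -/

def rowAvail (ν : List Bool) (y : ℕ) : List ℕ :=
  ((List.range (eastSteps ν + 1)).filter fun x => decide (heightAt ν x ≤ y)).reverse

def pointsAtHeight (μ : List Bool) (y : ℕ) : ℕ :=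
  ((List.range (μ.length + 1)).filter fun i => decide ((μ.take i).count true = y)).length

def rflushAux (ν : List Bool) : List ℕ → ℕ → List ℕ → List (ℕ × ℕ)
  | [], _, _ => []
  | c :: rest, y, forbidden =>
    let placed := ((rowAvail ν y).filter fun x => decide (x ∉ forbidden)).take c
    placed.map (fun x => (x, y)) ++ rflushAux ν rest (y + 1) (forbidden ++ placed.dropLast)

/-- Right-flushing map `R`. -/
def Rflush (ν μ : List Bool) : Set (ℕ × ℕ) :=
  {p | p ∈ rflushAux ν ((List.range (northSteps ν + 1)).map (pointsAtHeight μ)) 0 []}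

def lflushAux (m : ℕ) : List ℕ → ℕ → List ℕ → List (ℕ × ℕ)
  | [], _, _ => []
  | c :: rest, y, forbidden =>
    let placed := ((List.range (m + 1)).filter fun x => decide (x ∉ forbidden)).take c
    placed.map (fun x => (x, y)) ++ lflushAux m rest (y + 1) (forbidden ++ placed.dropLast)

noncomputable def rowCount (T : Set (ℕ × ℕ)) (y : ℕ) : ℕ := {x | (x, y) ∈ T}.ncard

/-- Left-flushing map `L`. -/
noncomputable def Lflush (ν : List Bool) (T : Set (ℕ × ℕ)) : Set (ℕ × ℕ) :=
  {p | p ∈ lflushAux (eastSteps ν) ((List.range (northSteps ν + 1)).map (rowCount T)) 0 []}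

def pathPointSet (μ : List Bool) : Set (ℕ × ℕ) := {p | ∃ i ≤ μ.length, pointAt μ i = p}

/-! Bracket vectors (0-indexed positions `0,…,ℓ`). -/

noncomputable def fpos (ν : List Bool) (k : ℕ) : ℕ :=
  sSup {i | i ≤ ν.length ∧ (ν.take i).count true = k}

def bmin (ν : List Bool) : List ℕ :=
  (List.range (ν.length + 1)).map fun i => (ν.take i).count true

def IsBracketVector (ν : List Bool) (b : List ℕ) : Prop :=
  b.length = ν.length + 1 ∧
    (∀ k ≤ northSteps ν, b.getD (fpos ν k) 0 = k) ∧
    (∀ i < b.length, (bmin ν).getD i 0 ≤ b.getD i 0 ∧ b.getD i 0 ≤ northSteps ν) ∧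
    ∀ i j k, i < j → j < k → k < b.length →
      ¬(b.getD i 0 = b.getD k 0 ∧ b.getD i 0 < b.getD j 0)

noncomputable def leftChild (T : Set (ℕ × ℕ)) (p : ℕ × ℕ) : Option (ℕ × ℕ) :=
  if ∃ b, (p.1, b) ∈ T ∧ b < p.2 then some (p.1, sSup {b | (p.1, b) ∈ T ∧ b < p.2})
  else none

noncomputable def rightChild (T : Set (ℕ × ℕ)) (p : ℕ × ℕ) : Option (ℕ × ℕ) :=
  if ∃ a, (a, p.2) ∈ T ∧ p.1 < a then
    if ∃ b, (sInf {a | (a, p.2) ∈ T ∧ p.1 < a}, b) ∈ T ∧ p.2 < b then none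
    else some (sInf {a | (a, p.2) ∈ T ∧ p.1 < a}, p.2)
  else none

noncomputable def inorderAux (T : Set (ℕ × ℕ)) : ℕ → ℕ × ℕ → List (ℕ × ℕ)
  | 0, _ => []
  | fuel + 1, p =>
    (match leftChild T p with
      | none => []
      | some l => inorderAux T fuel l) ++ p ::
      (match rightChild T p with
        | none => []
        | some r => inorderAux T fuel r)

/-- Bracket vector of a ν-tree: y-coordinates read in in-order from the root `(0,n)`. -/
noncomputable def bracketOfTree (ν : List Bool) (T : Set (ℕ × ℕ)) : List ℕ :=
  (inorderAux T T.ncard (0, northSteps ν)).map Prod.snd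

noncomputable def bracketAssign (ν μ : List Bool) : List (ℕ × ℕ) :=
  ((List.range (northSteps ν + 1)).foldl
    (fun (st : List (ℕ × ℕ) × List ℕ) k =>
      let picked := ((st.2.filter fun i => decide (i ≤ fpos ν k)).reverse).take
        (pointsAtHeight μ k)
      (st.1 ++ picked.map fun i => (i, k), st.2.filter fun i => decide (i ∉ picked)))
    ([], List.range (ν.length + 1))).1

/-- Bracket vector of a ν-path. -/
noncomputable def bracketOfPath (ν μ : List Bool) : List ℕ :=
  (List.range (ν.length + 1)).map fun i => ((bracketAssign ν μ).lookup i).getD 0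

/-- Componentwise order on (equal length) integer vectors. -/
def listLE (b b' : List ℕ) : Prop :=
  b.length = b'.length ∧ ∀ i, b.getD i 0 ≤ b'.getD i 0

/-! Reversal -/

def revPath (ν : List Bool) : List Bool := ν.reverse.map fun s => !s

def revTree (ν : List Bool) (T : Set (ℕ × ℕ)) : Set (ℕ × ℕ) :=
  (fun p : ℕ × ℕ => (northSteps ν - p.2, eastSteps ν - p.1)) '' T

/-! Pipe dreams and subword complexes -/

def dOf (ν : List Bool) (p : ℕ × ℕ) : ℕ := p.1 + (northSteps ν - p.2)

def labelPerm (ν : List Bool) (p : ℕ × ℕ) : Equiv.Perm ℕ :=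
  Equiv.swap (dOf ν p + 1) (dOf ν p + 2)

/-- The points of `A_ν` in reading order: rows from bottom to top, each left to right. -/
def readingList (ν : List Bool) : List (ℕ × ℕ) :=
  ((List.range (northSteps ν + 1)).map fun y =>
    ((List.range (eastSteps ν + 1)).filter fun x => decide (heightAt ν x ≤ y)).map
      fun x => (x, y)).flatten

/-- The minimal ν-tree. -/
def TminSet (ν : List Bool) : Set (ℕ × ℕ) :=
  {p | p ∈ APts ν ∧ (p.1 = 0 ∨ ∃ i < ν.length, ν.getD i true = false ∧ p = pointAt ν (i + 1))}

noncomputable def prodOver (ν : List Bool) (C : Set (ℕ × ℕ)) : Equiv.Perm ℕ :=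
  (((readingList ν).filter fun p => decide (p ∈ C)).map (labelPerm ν)).prod

/-- Coxeter length: number of inversions. -/
noncomputable def lenInv (π : Equiv.Perm ℕ) : ℕ :=
  {q : ℕ × ℕ | q.1 < q.2 ∧ π q.2 < π q.1}.ncard

noncomputable def piNu (ν : List Bool) : Equiv.Perm ℕ := prodOver ν (APts ν \ TminSet ν)

def Qword (ν : List Bool) : List (Equiv.Perm ℕ) := (readingList ν).map (labelPerm ν)

noncomputable def prodAt (Q : List (Equiv.Perm ℕ)) (P : Finset ℕ) : Equiv.Perm ℕ :=
  (((List.range Q.length).filter fun i => decide (i ∈ P)).map fun i => Q.getD i 1).prod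

def IsFacet (Q : List (Equiv.Perm ℕ)) (π : Equiv.Perm ℕ) (I : Finset ℕ) : Prop :=
  I ⊆ Finset.range Q.length ∧
    prodAt Q (Finset.range Q.length \ I) = π ∧
    (Finset.range Q.length \ I).card = lenInv π

def IncFlip (Q : List (Equiv.Perm ℕ)) (π : Equiv.Perm ℕ) (I J : Finset ℕ) : Prop :=
  IsFacet Q π I ∧ IsFacet Q π J ∧ ∃ i ∈ I, ∃ j ∈ J, i < j ∧ I.erase i = J.erase j

def FlipLE (Q : List (Equiv.Perm ℕ)) (π : Equiv.Perm ℕ) : Finset ℕ → Finset ℕ → Prop :=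
  Relation.ReflTransGen (IncFlip Q π)

/-- The maximal ν-tree. -/
def TmaxSet (ν : List Bool) : Set (ℕ × ℕ) :=
  {p | (p.1 ≤ eastSteps ν ∧ p.2 = northSteps ν) ∨ ∃ i < ν.length, ν.getD i false = true ∧ p = pointAt ν i}

/-!
Let `X k` be the right end of row `k` of `A_ν` and `c k` the number of points of `μ` in that row.
Both sides are produced by one greedy process: at stage `k` one picks the `c k` largest of the
numbers `0, …, f k` that are still available. For right flushing these numbers are columns,
`f k = X k`, and the smallest number picked stays available. For the bracket vector they are
positions, `f k = X k + k`, and every number picked is used up. Each row therefore gives the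
positions one new candidate more than the columns and also loses one candidate more, so the lists
of open columns and open positions, read from the right, correspond entry by entry in every row.
By induction on `k`, the subtree hanging below an open column is read in in-order as the block of
assigned bracket entries just before the corresponding open position, since going left along row
`k` glues these blocks together with the positions assigned at stage `k`. In the top row, at the
root, a single block is left: the whole bracket vector.
-/

/-! ### Row ends -/

/-- Right end of row `k` of `A_ν`: the number of east steps of `ν` before its `(k+1)`-st north
step. -/
def rowEnd : List Bool → ℕ → ℕ
  | [], _ => 0
  | false :: ν, k => rowEnd ν k + 1
  | true :: _, 0 => 0
  | true :: ν, k + 1 => rowEnd ν k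

theorem rowEnd_le_eastSteps (ν : List Bool) (k : ℕ) : rowEnd ν k ≤ eastSteps ν := by
  fun_induction rowEnd ν k <;> simp_all [eastSteps]

theorem rowEnd_northSteps (ν : List Bool) : rowEnd ν (northSteps ν) = eastSteps ν := by
  induction ν with
  | nil => rfl
  | cons s ν ih => cases s <;> simpa [rowEnd, eastSteps, northSteps] using ih

theorem rowEnd_monotone (ν : List Bool) : Monotone (rowEnd ν) := by
  refine monotone_nat_of_le_succ fun k => ?_
  fun_induction rowEnd ν k <;> simp_all [rowEnd]

theorem heightAt_le_iff_le_rowEnd {ν : List Bool} {x : ℕ} (hx : x ≤ eastSteps ν) (k : ℕ) :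
    heightAt ν x ≤ k ↔ x ≤ rowEnd ν k := by
  fun_induction rowEnd ν k generalizing x <;> cases x <;>
    simp_all [heightAt, eastSteps]

theorem length_eq_eastSteps_add_northSteps (ν : List Bool) :
    ν.length = eastSteps ν + northSteps ν :=
  (List.count_false_add_count_true ν).symm

theorem rowEnd_add_le_length {ν : List Bool} {k : ℕ} (hk : k ≤ northSteps ν) :
    rowEnd ν k + k ≤ ν.length := by
  rw [length_eq_eastSteps_add_northSteps]
  exact add_le_add (rowEnd_le_eastSteps ν k) hk

theorem pointAt_rowEnd_add {ν : List Bool} {k : ℕ} (hk : k ≤ northSteps ν) :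
    pointAt ν (rowEnd ν k + k) = (rowEnd ν k, k) := by
  fun_induction rowEnd ν k <;>
    simp_all [pointAt, northSteps, add_right_comm _ 1, ← add_assoc]

theorem le_rowEnd_add_count_take {ν : List Bool} {i : ℕ} (hi : i ≤ ν.length) :
    i ≤ rowEnd ν ((ν.take i).count true) + (ν.take i).count true := by
  induction ν generalizing i with
  | nil => simp_all
  | cons s ν ih =>
    cases i with
    | zero => exact Nat.zero_le _
    | succ i =>
      have := ih (Nat.le_of_succ_le_succ hi)
      cases s <;> simp only [rowEnd, List.take_succ_cons, List.count_cons_self, ne_eq,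
        Bool.false_eq_true, not_false_eq_true, List.count_cons_of_ne] <;> omega

theorem fpos_eq_rowEnd_add {ν : List Bool} {k : ℕ} (hk : k ≤ northSteps ν) :
    fpos ν k = rowEnd ν k + k := by
  have hlast : IsGreatest {i | i ≤ ν.length ∧ (ν.take i).count true = k} (rowEnd ν k + k) :=
    ⟨⟨rowEnd_add_le_length hk, congrArg Prod.snd (pointAt_rowEnd_add hk)⟩,
      fun _ ⟨hi, hik⟩ => hik ▸ le_rowEnd_add_count_take hi⟩
  exact hlast.csSup_eq

theorem IsNuPath.rowEnd_le {ν μ : List Bool} (h : IsNuPath ν μ) {k : ℕ}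
    (hk : k ≤ northSteps ν) : rowEnd μ k ≤ rowEnd ν k := by
  have hkμ : k ≤ northSteps μ := h.2.1 ▸ hk
  have hmem := h.2.2 _ (rowEnd_add_le_length hkμ)
  rw [pointAt_rowEnd_add hkμ] at hmem
  exact (heightAt_le_iff_le_rowEnd hmem.1 k).1 hmem.2.1

theorem pointsAtHeight_cons_false (μ : List Bool) (k : ℕ) :
    pointsAtHeight (false :: μ) k = pointsAtHeight μ k + if k = 0 then 1 else 0 := by
  unfold pointsAtHeight
  rw [List.length_cons, List.range_succ_eq_map (n := μ.length + 1), List.filter_cons]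
  cases k <;> simp [List.filter_map, Function.comp_def]

theorem pointsAtHeight_cons_true_zero (μ : List Bool) : pointsAtHeight (true :: μ) 0 = 1 := by
  unfold pointsAtHeight
  rw [List.length_cons, List.range_succ_eq_map (n := μ.length + 1), List.filter_cons]
  simp [List.filter_map, Function.comp_def]

theorem pointsAtHeight_cons_true_succ (μ : List Bool) (k : ℕ) :
    pointsAtHeight (true :: μ) (k + 1) = pointsAtHeight μ k := by
  unfold pointsAtHeight
  rw [List.length_cons, List.range_succ_eq_map (n := μ.length + 1), List.filter_cons]
  simp [List.filter_map, Function.comp_def]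

theorem one_le_pointsAtHeight {μ : List Bool} {k : ℕ} (hk : k ≤ northSteps μ) :
    1 ≤ pointsAtHeight μ k := by
  refine List.length_pos_of_mem (a := rowEnd μ k + k) ?_
  have hcount : (μ.take (rowEnd μ k + k)).count true = k :=
    congrArg Prod.snd (pointAt_rowEnd_add hk)
  simpa [hcount, Nat.lt_succ_iff] using rowEnd_add_le_length hk

theorem sum_pointsAtHeight {μ : List Bool} {k : ℕ} (hk : k ≤ northSteps μ) :
    ∑ j ∈ Finset.range (k + 1), pointsAtHeight μ j = rowEnd μ k + k + 1 := by
  fun_induction rowEnd μ k with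
  | case1 k => simp_all [northSteps, pointsAtHeight]
  | case2 μ k ih =>
    have := ih (by simpa [northSteps] using hk)
    simp only [pointsAtHeight_cons_false, Finset.sum_add_distrib, this, Finset.sum_ite_eq',
      Finset.mem_range, Nat.succ_pos, if_true]
    omega
  | case3 => simp [pointsAtHeight_cons_true_zero]
  | case4 μ k ih =>
    have := ih (by simpa [northSteps] using hk)
    simp only [Finset.sum_range_succ', pointsAtHeight_cons_true_zero,
      pointsAtHeight_cons_true_succ] at this ⊢
    omega

/-! ### The greedy process -/

theorem mem_take_of_getElem? {α : Type*} {l : List α} {i m : ℕ} {x : α} (hx : l[i]? = some x)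
    (hi : i < m) : x ∈ l.take m :=
  List.mem_of_getElem? ((List.getElem?_take_of_lt hi).trans hx)

theorem mem_drop_iff_of_nodup {α : Type*} {l : List α} (hl : l.Nodup) {m : ℕ} {x : α} :
    x ∈ l.drop m ↔ x ∈ l ∧ x ∉ l.take m := by
  have hdisj := List.disjoint_take_drop hl (le_refl m)
  constructor
  · exact fun h => ⟨List.mem_of_mem_drop h, fun h' => hdisj h' h⟩
  · rintro ⟨hx, hx'⟩
    rw [← List.take_append_drop m l, List.mem_append] at hx
    exact hx.resolve_left hx'

/-- The greedy process underlying both `Rflush` and `bracketAssign`. At stage `k` the candidates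
are `0, …, f k`, of which each stage `j < k` has used up the `d j` largest ones available to it;
`avail f d k` lists the remaining candidates in decreasing order. -/
def avail (f d : ℕ → ℕ) : ℕ → List ℕ
  | 0 => (List.range (f 0 + 1)).reverse
  | k + 1 => (List.range' (f k + 1) (f (k + 1) - f k)).reverse ++ (avail f d k).drop (d k)

/-- The candidates used up before stage `k`. -/
def spent (f d : ℕ → ℕ) (k : ℕ) : List ℕ :=
  (List.range k).flatMap fun j => (avail f d j).take (d j)

theorem spent_succ (f d : ℕ → ℕ) (k : ℕ) :
    spent f d (k + 1) = spent f d k ++ (avail f d k).take (d k) := by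
  simp [spent, List.range_succ]

section Avail

variable {f d : ℕ → ℕ} {k : ℕ}

theorem le_of_mem_avail (hf : Monotone f) {x : ℕ} (hx : x ∈ avail f d k) : x ≤ f k := by
  induction k with
  | zero => simpa [avail, Nat.lt_succ_iff] using hx
  | succ k ih =>
    have hk : f k ≤ f (k + 1) := hf k.le_succ
    simp only [avail, List.mem_append, List.mem_reverse, List.mem_range'_1] at hx
    rcases hx with hx | hx
    · omega
    · exact (ih (List.mem_of_mem_drop hx)).trans hk

theorem avail_pairwise_gt (hf : Monotone f) (k : ℕ) : (avail f d k).Pairwise (· > ·) := by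
  induction k with
  | zero => exact List.pairwise_reverse.2 List.pairwise_lt_range
  | succ k ih =>
    refine List.pairwise_append.2 ⟨List.pairwise_reverse.2 List.pairwise_lt_range',
      ih.sublist (List.drop_sublist _ _), fun a ha b hb => ?_⟩
    have := le_of_mem_avail hf (List.mem_of_mem_drop hb)
    simp only [List.mem_reverse, List.mem_range'_1] at ha
    omega

theorem avail_nodup (hf : Monotone f) (k : ℕ) : (avail f d k).Nodup :=
  (avail_pairwise_gt hf k).imp ne_of_gt

theorem avail_getElem?_lt_iff (hf : Monotone f) {i j x y : ℕ}
    (hx : (avail f d k)[i]? = some x) (hy : (avail f d k)[j]? = some y) : y < x ↔ i < j := by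
  obtain ⟨hi, rfl⟩ := List.getElem?_eq_some_iff.1 hx
  obtain ⟨hj, rfl⟩ := List.getElem?_eq_some_iff.1 hy
  exact (avail_pairwise_gt hf k).sortedGT.strictAnti_get.lt_iff_gt (a := ⟨j, hj⟩) (b := ⟨i, hi⟩)

theorem le_of_mem_spent (hf : Monotone f) {x : ℕ} (hx : x ∈ spent f d k) : x ≤ f k := by
  obtain ⟨j, hj, hx⟩ := List.mem_flatMap.1 hx
  exact (le_of_mem_avail hf (List.mem_of_mem_take hx)).trans (hf (List.mem_range.1 hj).le)

theorem mem_avail (hf : Monotone f) {x : ℕ} : x ∈ avail f d k ↔ x ≤ f k ∧ x ∉ spent f d k := by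
  induction k with
  | zero => simp [avail, spent]
  | succ k ih =>
    have hk : f k ≤ f (k + 1) := hf k.le_succ
    simp only [avail, List.mem_append, List.mem_reverse, List.mem_range'_1,
      mem_drop_iff_of_nodup (avail_nodup hf k), ih, spent_succ, not_or]
    by_cases hx : x ≤ f k
    · have hnew : ¬ f k + 1 ≤ x := by omega
      simp [hx, hnew, hx.trans hk]
    · have hspent : x ∉ spent f d k := mt (le_of_mem_spent hf) hx
      have htake : x ∉ (avail f d k).take (d k) := fun h =>
        hx (le_of_mem_avail hf (List.mem_of_mem_take h))
      simp only [hx, hspent, htake, or_false, not_false_eq_true, and_true]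
      omega

theorem notMem_avail_of_mem_take (hf : Monotone f) {j x : ℕ} (hjk : j < k)
    (hx : x ∈ (avail f d j).take (d j)) : x ∉ avail f d k := fun h =>
  ((mem_avail hf).1 h).2 (List.mem_flatMap.2 ⟨j, List.mem_range.2 hjk, hx⟩)

theorem length_avail_add_sum (hf : Monotone f) {n : ℕ}
    (hd : ∀ k ≤ n, ∑ j ∈ Finset.range (k + 1), d j ≤ f k + 1) (hk : k ≤ n) :
    (avail f d k).length + ∑ j ∈ Finset.range k, d j = f k + 1 := by
  induction k with
  | zero => simp [avail]
  | succ k ih =>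
    have hk' : k ≤ n := by omega
    have hle := hd k hk'
    have hfk : f k ≤ f (k + 1) := hf k.le_succ
    have ih := ih hk'
    rw [Finset.sum_range_succ] at hle ⊢
    simp only [avail, List.length_append, List.length_reverse, List.length_range',
      List.length_drop]
    omega

theorem avail_zero_getElem? {i : ℕ} (hi : i ≤ f 0) : (avail f d 0)[i]? = some (f 0 - i) := by
  rw [avail, List.getElem?_reverse (by simpa [Nat.lt_succ_iff]),
    List.getElem?_range (by simp), List.length_range, Nat.add_sub_cancel]

theorem avail_succ_getElem?_of_lt {i : ℕ} (hi : i < f (k + 1) - f k) :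
    (avail f d (k + 1))[i]? = some (f (k + 1) - i) := by
  rw [avail, List.getElem?_append_left (by simpa), List.getElem?_reverse (by simpa),
    List.getElem?_range' (by rw [List.length_range']; omega), List.length_range', one_mul,
    Option.some_inj]
  omega

theorem avail_succ_getElem?_add {i m : ℕ} (hm : m = f (k + 1) - f k) :
    (avail f d (k + 1))[m + i]? = (avail f d k)[d k + i]? := by
  rw [avail, List.getElem?_append_right (by simp [hm])]
  simp [hm]

theorem avail_getElem?_zero (hf : StrictMono f) (k : ℕ) : (avail f d k)[0]? = some (f k) := by
  cases k with
  | zero => exact avail_zero_getElem? (Nat.zero_le _)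
  | succ k => exact avail_succ_getElem?_of_lt (Nat.sub_pos_of_lt (hf k.lt_succ_self))

theorem avail_getLast? (hd : ∀ j < k, d j < (avail f d j).length) :
    (avail f d k).getLast? = some 0 := by
  induction k with
  | zero => simp [avail, List.range_succ_eq_map]
  | succ k ih =>
    rw [avail, List.getLast?_append, List.getLast?_drop, if_neg (hd k k.lt_succ_self).not_ge,
      ih fun j hj => hd j (hj.trans k.lt_succ_self), Option.some_or]

end Avail


/-- The pairs `(x, k)`, `k < m`, with `x` among the `c k` largest candidates of stage `k`. Right
flushing uses `c k` columns but spends only `c k - 1` of them, so `c` may differ from `d`. -/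
def placements (f d c : ℕ → ℕ) (m : ℕ) : List (ℕ × ℕ) :=
  (List.range m).flatMap fun k => ((avail f d k).take (c k)).map fun x => (x, k)

section Placements

variable {f d c : ℕ → ℕ} {m : ℕ}

theorem mem_placements {x k : ℕ} :
    (x, k) ∈ placements f d c m ↔ k < m ∧ x ∈ (avail f d k).take (c k) := by
  simp [placements, -List.map_take]

theorem placements_succ (f d c : ℕ → ℕ) (m : ℕ) :
    placements f d c (m + 1) =
      placements f d c m ++ ((avail f d m).take (c m)).map fun x => (x, m) := by
  simp [placements, List.range_succ]

theorem placements_nodup (hf : Monotone f) : (placements f d c m).Nodup := by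
  refine List.nodup_flatMap.2 ⟨fun k _ => ?_, List.nodup_range.imp fun {a b} hab p ha hb => ?_⟩
  · exact ((avail_nodup hf k).sublist (List.take_sublist _ _)).map (Prod.mk_left_injective k)
  · simp only [List.mem_map] at ha hb
    grind

theorem length_placements (hc : ∀ k < m, c k ≤ (avail f d k).length) :
    (placements f d c m).length = ∑ k ∈ Finset.range m, c k := by
  induction m with
  | zero => simp [placements]
  | succ m ih =>
    rw [placements_succ, List.length_append, ih fun k hk => hc k (hk.trans m.lt_succ_self),
      List.length_map, List.length_take_of_le (hc m m.lt_succ_self), Finset.sum_range_succ]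

theorem lookup_placements (hf : Monotone f) {x k : ℕ} (hk : k < m)
    (hx : x ∈ (avail f c k).take (c k)) : (placements f c c m).lookup x = some k := by
  obtain ⟨j, hj⟩ : ∃ j, (placements f c c m).lookup x = some j := by
    rw [← Option.isSome_iff_exists, List.lookup_isSome_iff]
    exact ⟨(x, k), mem_placements.2 ⟨hk, hx⟩, beq_self_eq_true x⟩
  obtain ⟨l₁, l₂, hl, -⟩ := List.lookup_eq_some_iff.1 hj
  have hxj : x ∈ (avail f c j).take (c j) :=
    (mem_placements.1 (hl ▸ List.mem_append_right l₁ List.mem_cons_self)).2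
  rcases lt_trichotomy j k with hjk | rfl | hkj
  · exact absurd (List.mem_of_mem_take hx) (notMem_avail_of_mem_take hf hjk hxj)
  · exact hj
  · exact absurd (List.mem_of_mem_take hxj) (notMem_avail_of_mem_take hf hkj hx)

end Placements

/-- Stage `k` of the bracket vector construction, with `f` and `c` in place of `fpos ν` and
`pointsAtHeight μ`; the state is the list of assignments and the list of unassigned positions. -/
def assignStage (f c : ℕ → ℕ) (st : List (ℕ × ℕ) × List ℕ) (k : ℕ) : List (ℕ × ℕ) × List ℕ :=
  let picked := ((st.2.filter fun i => decide (i ≤ f k)).reverse).take (c k)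
  (st.1 ++ picked.map fun i => (i, k), st.2.filter fun i => decide (i ∉ picked))

theorem foldl_assignStage {f c : ℕ → ℕ} (hf : Monotone f) {N m : ℕ} (hN : ∀ k < m, f k < N) :
    (List.range m).foldl (assignStage f c) ([], List.range N) =
      (placements f c c m, (List.range N).filter fun i => decide (i ∉ spent f c m)) := by
  induction m with
  | zero => simp [placements, spent]
  | succ m ih =>
    have havail : (((List.range N).filter fun i => decide (i ∉ spent f c m)).filter
        fun i => decide (i ≤ f m)).reverse = avail f c m := by
      refine List.Pairwise.eq_of_mem_iff (List.pairwise_reverse.2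
        ((List.pairwise_lt_range.filter _).filter _)) (avail_pairwise_gt hf m) fun i => ?_
      have := hN m m.lt_succ_self
      simp only [List.mem_reverse, List.mem_filter, List.mem_range, decide_eq_true_eq,
        mem_avail hf]
      grind
    rw [List.range_succ, List.foldl_append, ih fun k hk => hN k (hk.trans m.lt_succ_self)]
    simp only [List.foldl_cons, List.foldl_nil, assignStage, havail]
    simp only [placements_succ, spent_succ, List.filter_filter, List.mem_append, not_or,
      Bool.decide_and, Bool.and_comm]

theorem rowAvail_filter_notMem_spent (ν : List Bool) (d : ℕ → ℕ) (k : ℕ) :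
    ((rowAvail ν k).filter fun x => decide (x ∉ spent (rowEnd ν) d k)) =
      avail (rowEnd ν) d k := by
  have hf := rowEnd_monotone ν
  refine List.Pairwise.eq_of_mem_iff ((List.pairwise_reverse.2
    (List.pairwise_lt_range.filter _)).filter _) (avail_pairwise_gt hf k) fun x => ?_
  have hle := rowEnd_le_eastSteps ν k
  have hheight := fun hx : x ≤ eastSteps ν => heightAt_le_iff_le_rowEnd hx k
  simp only [rowAvail, List.mem_reverse, List.mem_filter, List.mem_range, decide_eq_true_eq,
    mem_avail hf]
  grind

theorem rflushAux_eq_flatMap {ν : List Bool} {c : ℕ → ℕ} {y m : ℕ}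
    (hc : ∀ k < y + m, c k ≤ (avail (rowEnd ν) (fun j => c j - 1) k).length) :
    rflushAux ν ((List.range' y m).map c) y (spent (rowEnd ν) (fun j => c j - 1) y) =
      (List.range' y m).flatMap fun k =>
        ((avail (rowEnd ν) (fun j => c j - 1) k).take (c k)).map fun x => (x, k) := by
  induction m generalizing y with
  | zero => simp [rflushAux]
  | succ m ih =>
    have hdropLast : ((avail (rowEnd ν) (fun j => c j - 1) y).take (c y)).dropLast =
        (avail (rowEnd ν) (fun j => c j - 1) y).take (c y - 1) := by
      rw [List.dropLast_eq_take, List.length_take_of_le (hc y (by omega)), List.take_take,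
        min_eq_left (Nat.sub_le _ _)]
    rw [List.range'_succ, List.map_cons, List.flatMap_cons, rflushAux]
    simp only [rowAvail_filter_notMem_spent, hdropLast]
    rw [← ih fun k hk => hc k (by omega), spent_succ]

/-! ### Children and in-order traversal -/

theorem leftChild_eq_none {T : Set (ℕ × ℕ)} {x k : ℕ} (h : ∀ b < k, (x, b) ∉ T) :
    leftChild T (x, k) = none :=
  if_neg fun ⟨b, hb, hbk⟩ => h b hbk hb

theorem leftChild_succ_of_mem {T : Set (ℕ × ℕ)} {x k : ℕ} (h : (x, k) ∈ T) :
    leftChild T (x, k + 1) = some (x, k) := by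
  have hmax : IsGreatest {b | (x, b) ∈ T ∧ b < k + 1} k :=
    ⟨⟨h, k.lt_succ_self⟩, fun _ hb => Nat.le_of_lt_succ hb.2⟩
  rw [leftChild, if_pos ⟨k, h, k.lt_succ_self⟩, hmax.csSup_eq]

theorem leftChild_succ_of_notMem {T : Set (ℕ × ℕ)} {x k : ℕ} (h : (x, k) ∉ T) :
    leftChild T (x, k + 1) = leftChild T (x, k) := by
  have hiff : ∀ b, (x, b) ∈ T ∧ b < k + 1 ↔ (x, b) ∈ T ∧ b < k := by grind
  simp only [leftChild, hiff]

theorem rightChild_eq_none {T : Set (ℕ × ℕ)} {x k : ℕ} (h : ∀ a > x, (a, k) ∉ T) :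
    rightChild T (x, k) = none :=
  if_neg fun ⟨a, ha, hxa⟩ => h a hxa ha

theorem rightChild_eq_some {T : Set (ℕ × ℕ)} {x z k : ℕ} (hz : (z, k) ∈ T) (hxz : x < z)
    (hbetween : ∀ a, x < a → (a, k) ∈ T → z ≤ a) (habove : ∀ b > k, (z, b) ∉ T) :
    rightChild T (x, k) = some (z, k) := by
  have hmin : IsLeast {a | (a, k) ∈ T ∧ x < a} z :=
    ⟨⟨hz, hxz⟩, fun a ha => hbetween a ha.2 ha.1⟩
  rw [rightChild, if_pos ⟨z, hz, hxz⟩, hmin.csInf_eq, if_neg fun ⟨b, hb, hkb⟩ => habove b hkb hb]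

/-- `InorderHeights T o w`: the in-order traversal of `T` from `o` (empty if `o = none`) is finite
and has sequence of heights `w`. This is `inorderAux` without its fuel. -/
inductive InorderHeights (T : Set (ℕ × ℕ)) : Option (ℕ × ℕ) → List ℕ → Prop
  | none : InorderHeights T none []
  | some {p : ℕ × ℕ} {l r : List ℕ} : InorderHeights T (leftChild T p) l →
      InorderHeights T (rightChild T p) r → InorderHeights T (some p) (l ++ p.2 :: r)

theorem InorderHeights.map_snd_inorderAux {T : Set (ℕ × ℕ)} {p : ℕ × ℕ} {w : List ℕ}
    (h : InorderHeights T (Option.some p) w) {fuel : ℕ} (hfuel : w.length ≤ fuel) :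
    (inorderAux T fuel p).map Prod.snd = w := by
  induction fuel generalizing p w with
  | zero => cases h; simp at hfuel
  | succ fuel ih =>
    cases h with
    | @some _ l r hl hr =>
      simp only [List.length_append, List.length_cons] at hfuel
      have hleft : (match leftChild T p with
          | Option.none => []
          | Option.some q => inorderAux T fuel q).map Prod.snd = l := by
        cases hq : leftChild T p <;> rw [hq] at hl
        · cases hl; rfl
        · exact ih hl (by omega)
      have hright : (match rightChild T p with
          | Option.none => []
          | Option.some q => inorderAux T fuel q).map Prod.snd = r := by
        cases hq : rightChild T p <;> rw [hq] at hr
        · cases hr; rfl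
        · exact ih hr (by omega)
      rw [inorderAux, List.map_append, List.map_cons, hleft, hright]

/-! ### Open columns and open slots -/

/-- Row ends `X` and row sizes `c`, for rows `0, …, n`, satisfying what holds for a ν-path: rows
are nonempty, and the points of rows `0, …, k` fit into the positions `0, …, X k + k` of the
bracket vector, filling them all for `k = n`. -/
structure FlushProfile (X c : ℕ → ℕ) (n : ℕ) : Prop where
  mono : Monotone X
  one_le : ∀ k ≤ n, 1 ≤ c k
  sum_le : ∀ k ≤ n, ∑ j ∈ Finset.range (k + 1), c j ≤ X k + k + 1
  sum_eq : ∑ j ∈ Finset.range (n + 1), c j = X n + n + 1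

theorem IsNuPath.flushProfile {ν μ : List Bool} (h : IsNuPath ν μ) :
    FlushProfile (rowEnd ν) (pointsAtHeight μ) (northSteps ν) where
  mono := rowEnd_monotone ν
  one_le k hk := one_le_pointsAtHeight (h.2.1 ▸ hk)
  sum_le k hk := by
    rw [sum_pointsAtHeight (h.2.1 ▸ hk)]
    have := h.rowEnd_le hk
    omega
  sum_eq := by
    rw [← h.2.1, sum_pointsAtHeight le_rfl, rowEnd_northSteps, h.1, h.2.1, rowEnd_northSteps]

/-- The columns open in row `k` for right flushing, from right to left: all the points placed in
earlier rows but the leftmost one of each row have closed their columns. -/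
abbrev openCols (X c : ℕ → ℕ) : ℕ → List ℕ := avail X fun j => c j - 1

/-- The unassigned positions `≤ f_k = X k + k` of the bracket vector at stage `k`, from right to
left. -/
abbrev openSlots (X c : ℕ → ℕ) : ℕ → List ℕ := avail (fun j => X j + j) c

/-- The set of points produced by right flushing. -/
def flushTree (X c : ℕ → ℕ) (n : ℕ) : Set (ℕ × ℕ) :=
  {p | p ∈ placements X (fun j => c j - 1) c (n + 1)}

/-- Entry `i` of the bracket vector produced by the greedy assignment. -/
def bracketEntry (X c : ℕ → ℕ) (n i : ℕ) : ℕ :=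
  ((placements (fun j => X j + j) c c (n + 1)).lookup i).getD 0

/-- One past the open slot preceding the `i`-th one at stage `k`, or `0` if there is none: the
first position of the maximal block of assigned positions that ends just before the `i`-th slot. -/
def blockStart (X c : ℕ → ℕ) (k i : ℕ) : ℕ := ((openSlots X c k)[i + 1]?).elim 0 (· + 1)

theorem mem_flushTree {X c : ℕ → ℕ} {n x k : ℕ} :
    (x, k) ∈ flushTree X c n ↔ k ≤ n ∧ x ∈ (openCols X c k).take (c k) :=
  mem_placements.trans (and_congr_left' Nat.lt_succ_iff)

theorem strictMono_add_id {X : ℕ → ℕ} (hX : Monotone X) : StrictMono fun j => X j + j :=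
  hX.add_strictMono strictMono_id

theorem bracketEntry_eq {X c : ℕ → ℕ} {n k p : ℕ} (hX : Monotone X) (hk : k ≤ n)
    (hp : p ∈ (openSlots X c k).take (c k)) : bracketEntry X c n p = k := by
  rw [bracketEntry, lookup_placements (strictMono_add_id hX).monotone (Nat.lt_succ_of_le hk) hp,
    Option.getD_some]

section BlockStart

variable {X c : ℕ → ℕ} {k : ℕ}

theorem blockStart_zero (i : ℕ) : blockStart X c 0 i = X 0 - i := by
  rw [blockStart]
  rcases Nat.lt_or_ge i (X 0) with hi | hi
  · rw [avail_zero_getElem? (f := fun j => X j + j) (d := c) (by simpa using hi)]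
    simp only [Option.elim_some]
    omega
  · rw [List.getElem?_eq_none (by simpa [avail] using hi), Nat.sub_eq_zero_of_le hi]
    rfl

theorem blockStart_succ_of_lt {i : ℕ} (hi : i < X (k + 1) - X k) :
    blockStart X c (k + 1) i = X (k + 1) + (k + 1) - i := by
  rw [blockStart, avail_succ_getElem?_of_lt (f := fun j => X j + j) (d := c) (by omega)]
  simp only [Option.elim_some]
  omega

theorem blockStart_succ_add (hX : Monotone X) (i : ℕ) :
    blockStart X c (k + 1) (X (k + 1) - X k + i) =
      ((openSlots X c k)[c k + i]?).elim 0 (· + 1) := by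
  have hk : X k ≤ X (k + 1) := hX k.le_succ
  rw [blockStart, add_right_comm, avail_succ_getElem?_add (f := fun j => X j + j) (by omega)]

theorem blockStart_le {i p : ℕ} (hX : Monotone X) (hp : (openSlots X c k)[i]? = some p) :
    blockStart X c k i ≤ p := by
  rw [blockStart]
  cases hq : (openSlots X c k)[i + 1]? with
  | none => exact Nat.zero_le p
  | some q => exact (avail_getElem?_lt_iff (strictMono_add_id hX).monotone hp hq).2 i.lt_succ_self

end BlockStart

namespace FlushProfile

variable {X c : ℕ → ℕ} {n k : ℕ} (h : FlushProfile X c n)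
include h

theorem sum_pred_add (hk : k ≤ n + 1) :
    ∑ j ∈ Finset.range k, (c j - 1) + k = ∑ j ∈ Finset.range k, c j := by
  induction k with
  | zero => simp
  | succ k ih =>
    have := h.one_le k (by omega)
    rw [Finset.sum_range_succ, Finset.sum_range_succ, ← ih (by omega)]
    omega

theorem length_openSlots_add_sum (hk : k ≤ n) :
    (openSlots X c k).length + ∑ j ∈ Finset.range k, c j = X k + k + 1 :=
  length_avail_add_sum (strictMono_add_id h.mono).monotone h.sum_le hk

theorem length_openCols (hk : k ≤ n) : (openCols X c k).length = (openSlots X c k).length := by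
  have hcols : (openCols X c k).length + ∑ j ∈ Finset.range k, (c j - 1) = X k + 1 := by
    refine length_avail_add_sum h.mono (fun j hj => ?_) hk
    have := h.sum_le j hj
    have := h.sum_pred_add (k := j + 1) (by omega)
    omega
  have := h.length_openSlots_add_sum hk
  have := h.sum_pred_add (k := k) (by omega)
  omega

theorem le_length_openSlots (hk : k ≤ n) : c k ≤ (openSlots X c k).length := by
  have := h.length_openSlots_add_sum hk
  have := h.sum_le k hk
  rw [Finset.sum_range_succ] at this
  omega

theorem length_openSlots_last : (openSlots X c n).length = c n := by
  have := h.length_openSlots_add_sum le_rfl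
  have := h.sum_eq
  rw [Finset.sum_range_succ] at this
  omega

theorem le_length_openCols (hk : k ≤ n) : c k ≤ (openCols X c k).length :=
  (h.length_openCols hk).symm ▸ h.le_length_openSlots hk

theorem ncard_flushTree : (flushTree X c n).ncard = X n + n + 1 := by
  have hcoe : flushTree X c n =
      ((placements X (fun j => c j - 1) c (n + 1)).toFinset : Set (ℕ × ℕ)) := by
    ext p
    simp [flushTree]
  rw [hcoe, Set.ncard_coe_finset, List.toFinset_card_of_nodup (placements_nodup h.mono),
    length_placements fun k hk => h.le_length_openCols (Nat.le_of_lt_succ hk), h.sum_eq]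

end FlushProfile

/-! ### Subtrees and blocks -/

/-- The entries of the bracket vector at positions `a, …, b - 1`. -/
def bracketBlock (X c : ℕ → ℕ) (n a b : ℕ) : List ℕ := (List.Ico a b).map (bracketEntry X c n)

theorem bracketBlock_eq_nil {X c : ℕ → ℕ} {n a b : ℕ} (hba : b ≤ a) :
    bracketBlock X c n a b = [] := by
  rw [bracketBlock, List.Ico.eq_nil_of_le hba, List.map_nil]

theorem bracketBlock_append_cons {X c : ℕ → ℕ} {n a p b : ℕ} (hap : a ≤ p) (hpb : p < b) :
    bracketBlock X c n a p ++ bracketEntry X c n p :: bracketBlock X c n (p + 1) b =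
      bracketBlock X c n a b := by
  rw [bracketBlock, bracketBlock, bracketBlock, ← List.map_cons, ← List.Ico.eq_cons hpb,
    ← List.map_append, List.Ico.append_consecutive hap hpb.le]

/-- What hangs below the `i`-th open column of row `k` is read by the in-order traversal as the
block of the bracket vector just before the `i`-th open slot. -/
def ColumnReadsBlock (X c : ℕ → ℕ) (n k i : ℕ) : Prop :=
  ∀ x p, (openCols X c k)[i]? = some x → (openSlots X c k)[i]? = some p →
    InorderHeights (flushTree X c n) (leftChild (flushTree X c n) (x, k))
      (bracketBlock X c n (blockStart X c k i) p)

theorem columnReadsBlock_zero (X c : ℕ → ℕ) (n i : ℕ) : ColumnReadsBlock X c n 0 i := by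
  intro x p hx hp
  have hi : i ≤ X 0 := by
    have := (List.getElem?_eq_some_iff.1 hx).1
    simpa [avail, Nat.lt_succ_iff] using this
  have hpi : X 0 - i = p :=
    Option.some_inj.1 ((avail_zero_getElem? (f := fun j => X j + j) hi).symm.trans hp)
  rw [leftChild_eq_none fun b hb => absurd hb b.not_lt_zero, blockStart_zero,
    bracketBlock_eq_nil hpi.ge]
  exact .none

section OpenColumns

variable {X c : ℕ → ℕ} {n k i x : ℕ}

theorem rightChild_getElem?_zero (hX : Monotone X) (hx : (openCols X c k)[0]? = some x) :
    rightChild (flushTree X c n) (x, k) = none := by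
  refine rightChild_eq_none fun a hxa ha => ?_
  obtain ⟨j, hj⟩ := List.mem_iff_getElem?.1 (List.mem_of_mem_take (mem_flushTree.1 ha).2)
  exact j.not_lt_zero ((avail_getElem?_lt_iff hX hj hx).1 hxa)

theorem rightChild_getElem?_succ (hX : Monotone X) (hk : k ≤ n) (hi : i + 1 < c k) {z : ℕ}
    (hx : (openCols X c k)[i + 1]? = some x) (hz : (openCols X c k)[i]? = some z) :
    rightChild (flushTree X c n) (x, k) = some (z, k) := by
  refine rightChild_eq_some (mem_flushTree.2 ⟨hk, mem_take_of_getElem? hz (by omega)⟩)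
    ((avail_getElem?_lt_iff hX hz hx).2 i.lt_succ_self) (fun a hxa ha => ?_)
    fun b hkb hb => ?_
  · obtain ⟨j, hj⟩ := List.mem_iff_getElem?.1 (List.mem_of_mem_take (mem_flushTree.1 ha).2)
    have hji : j < i + 1 := (avail_getElem?_lt_iff hX hj hx).1 hxa
    exact not_lt.1 fun haz => by
      have := (avail_getElem?_lt_iff hX hz hj).1 haz
      omega
  · have hclosed : z ∈ (openCols X c k).take (c k - 1) := mem_take_of_getElem? hz (by omega)
    exact notMem_avail_of_mem_take hX hkb hclosed
      (List.mem_of_mem_take (mem_flushTree.1 hb).2)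

theorem columnReadsBlock_succ_of_lt (hX : Monotone X) (hi : i < X (k + 1) - X k) :
    ColumnReadsBlock X c n (k + 1) i := by
  intro x p hx hp
  have hxi := (avail_succ_getElem?_of_lt hi).symm.trans hx
  have hpi := (avail_succ_getElem?_of_lt (f := fun j => X j + j) (by omega)).symm.trans hp
  rw [Option.some_inj] at hxi hpi
  have hbelow : ∀ b < k + 1, (x, b) ∉ flushTree X c n := fun b hb hxb => by
    have := le_of_mem_avail hX (List.mem_of_mem_take (mem_flushTree.1 hxb).2)
    have := hX (Nat.le_of_lt_succ hb)
    omega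
  rw [leftChild_eq_none hbelow, blockStart_succ_of_lt hi, bracketBlock_eq_nil hpi.ge]
  exact .none

end OpenColumns

namespace FlushProfile

variable {X c : ℕ → ℕ} {n k i x : ℕ} (h : FlushProfile X c n)
include h

theorem exists_openSlots_getElem? (hk : k ≤ n) (hx : (openCols X c k)[i]? = some x) :
    ∃ p, (openSlots X c k)[i]? = some p := by
  obtain ⟨hi, -⟩ := List.getElem?_eq_some_iff.1 hx
  exact ⟨_, List.getElem?_eq_getElem (h.length_openCols hk ▸ hi)⟩

theorem inorderHeights_of_rightChild (hk : k ≤ n) (hcol : ColumnReadsBlock X c n k i)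
    (hi : i < c k) {p : ℕ} (hx : (openCols X c k)[i]? = some x)
    (hp : (openSlots X c k)[i]? = some p)
    (hright : InorderHeights (flushTree X c n) (rightChild (flushTree X c n) (x, k))
      (bracketBlock X c n (p + 1) (X k + k + 1))) :
    InorderHeights (flushTree X c n) (some (x, k))
      (bracketBlock X c n (blockStart X c k i) (X k + k + 1)) := by
  have hpk : p ≤ X k + k :=
    le_of_mem_avail (strictMono_add_id h.mono).monotone (List.mem_of_getElem? hp)
  rw [← bracketBlock_append_cons (blockStart_le h.mono hp) (Nat.lt_succ_of_le hpk),
    bracketEntry_eq h.mono hk (mem_take_of_getElem? hp hi)]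
  exact .some (hcol x p hx hp) hright

theorem inorderHeights_row (hk : k ≤ n) (hcol : ∀ i, ColumnReadsBlock X c n k i) (hi : i < c k)
    (hx : (openCols X c k)[i]? = some x) :
    InorderHeights (flushTree X c n) (some (x, k))
      (bracketBlock X c n (blockStart X c k i) (X k + k + 1)) := by
  induction i generalizing x with
  | zero =>
    have hp : (openSlots X c k)[0]? = some (X k + k) :=
      avail_getElem?_zero (strictMono_add_id h.mono) k
    refine h.inorderHeights_of_rightChild hk (hcol _) hi hx hp ?_
    rw [rightChild_getElem?_zero h.mono hx, bracketBlock_eq_nil le_rfl]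
    exact .none
  | succ i ih =>
    obtain ⟨p, hp⟩ := h.exists_openSlots_getElem? hk hx
    have hz := List.getElem?_eq_getElem (i.lt_succ_self.trans (List.getElem?_eq_some_iff.1 hx).1)
    refine h.inorderHeights_of_rightChild hk (hcol _) hi hx hp ?_
    have hstart : blockStart X c k i = p + 1 := by rw [blockStart, hp, Option.elim_some]
    rw [rightChild_getElem?_succ h.mono hk hi hx hz, ← hstart]
    exact ih (by omega) hz

theorem columnReadsBlock_succ_sub (hk : k ≤ n) (hcol : ∀ i, ColumnReadsBlock X c n k i) :
    ColumnReadsBlock X c n (k + 1) (X (k + 1) - X k) := by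
  intro x p hx hp
  have hXk : X k ≤ X (k + 1) := h.mono k.le_succ
  have hck := h.one_le k hk
  rw [← Nat.add_zero (_ - _), avail_succ_getElem?_add rfl, Nat.add_zero] at hx
  have hpk : p = X k + k + 1 := by
    have := (avail_succ_getElem?_of_lt (f := fun j => X j + j) (by omega)).symm.trans hp
    rw [Option.some_inj] at this
    omega
  have hstart : blockStart X c (k + 1) (X (k + 1) - X k) = blockStart X c k (c k - 1) := by
    rw [← Nat.add_zero (_ - _), blockStart_succ_add h.mono, blockStart, Nat.sub_add_cancel hck,
      Nat.add_zero]
  have hmem : (x, k) ∈ flushTree X c n :=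
    mem_flushTree.2 ⟨hk, mem_take_of_getElem? hx (Nat.sub_one_lt_of_le hck le_rfl)⟩
  rw [leftChild_succ_of_mem hmem, hstart, hpk]
  exact h.inorderHeights_row hk hcol (Nat.sub_one_lt_of_le hck le_rfl) hx

theorem columnReadsBlock_succ_sub_add (hk : k ≤ n) (hcol : ColumnReadsBlock X c n k (c k + i)) :
    ColumnReadsBlock X c n (k + 1) (X (k + 1) - X k + (i + 1)) := by
  intro x p hx hp
  have hXk : X k ≤ X (k + 1) := h.mono k.le_succ
  have hck := h.one_le k hk
  have hstart : blockStart X c (k + 1) (X (k + 1) - X k + (i + 1)) = blockStart X c k (c k + i) :=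
    blockStart_succ_add h.mono (i + 1)
  rw [avail_succ_getElem?_add rfl, show c k - 1 + (i + 1) = c k + i by omega] at hx
  rw [show X (k + 1) - X k + (i + 1) = X (k + 1) - X k + 1 + i by omega,
    avail_succ_getElem?_add (f := fun j => X j + j) (by omega)] at hp
  have hdrop : x ∈ (openCols X c k).drop (c k) :=
    List.mem_of_getElem? (i := i) (List.getElem?_drop.trans hx)
  have hnotMem : (x, k) ∉ flushTree X c n := fun hxk =>
    ((mem_drop_iff_of_nodup (avail_nodup h.mono k)).1 hdrop).2 (mem_flushTree.1 hxk).2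
  rw [leftChild_succ_of_notMem hnotMem, hstart]
  exact hcol x p hx hp

theorem columnReadsBlock (hk : k ≤ n) (i : ℕ) : ColumnReadsBlock X c n k i := by
  induction k generalizing i with
  | zero => exact columnReadsBlock_zero X c n i
  | succ k ih =>
    have hk : k ≤ n := by omega
    -- Column `i` is new, or holds the leftmost point of row `k`, or was not reached by row `k`.
    rcases Nat.lt_or_ge i (X (k + 1) - X k) with hi | hi
    · exact columnReadsBlock_succ_of_lt h.mono hi
    · obtain ⟨j, rfl⟩ := Nat.exists_eq_add_of_le hi
      cases j with
      | zero => exact h.columnReadsBlock_succ_sub hk (ih hk)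
      | succ j => exact h.columnReadsBlock_succ_sub_add hk (ih hk _)

theorem inorderHeights_root :
    InorderHeights (flushTree X c n) (some (0, n))
      ((List.range (X n + n + 1)).map (bracketEntry X c n)) := by
  have hcn := h.one_le n le_rfl
  have hroot : (openCols X c n)[c n - 1]? = some 0 := by
    have hlast : (openCols X c n).getLast? = some 0 := avail_getLast? fun j hj =>
      Nat.sub_one_lt_of_le (h.one_le j hj.le) (h.le_length_openCols hj.le)
    rwa [List.getLast?_eq_getElem?, h.length_openCols le_rfl, h.length_openSlots_last] at hlast
  have hstart : blockStart X c n (c n - 1) = 0 := by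
    rw [blockStart, List.getElem?_eq_none (h.length_openSlots_last.trans_le (by omega)),
      Option.elim_none]
  have hrow := h.inorderHeights_row le_rfl (h.columnReadsBlock le_rfl)
    (Nat.sub_one_lt_of_le hcn le_rfl) hroot
  rwa [hstart, bracketBlock, List.Ico.zero_bot] at hrow

end FlushProfile

theorem rflush_eq_flushTree {ν μ : List Bool} (h : IsNuPath ν μ) :
    Rflush ν μ = flushTree (rowEnd ν) (pointsAtHeight μ) (northSteps ν) := by
  have haux := rflushAux_eq_flatMap (ν := ν) (c := pointsAtHeight μ) (y := 0)
    (m := northSteps ν + 1) fun k hk => h.flushProfile.le_length_openCols (by omega)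
  rw [← List.range_eq_range'] at haux
  exact congrArg (fun l : List (ℕ × ℕ) => {p | p ∈ l}) haux

theorem bracketOfPath_eq_map_bracketEntry (ν μ : List Bool) :
    bracketOfPath ν μ = (List.range (ν.length + 1)).map
      (bracketEntry (rowEnd ν) (pointsAtHeight μ) (northSteps ν)) := by
  have hmono : Monotone fun k => rowEnd ν k + k :=
    (strictMono_add_id (rowEnd_monotone ν)).monotone
  have hassign : bracketAssign ν μ = placements (fun k => rowEnd ν k + k) (pointsAtHeight μ)
      (pointsAtHeight μ) (northSteps ν + 1) :=
    calc
      bracketAssign ν μ = ((List.range (northSteps ν + 1)).foldl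
          (assignStage (fpos ν) (pointsAtHeight μ)) ([], List.range (ν.length + 1))).1 := rfl
      _ = ((List.range (northSteps ν + 1)).foldl
          (assignStage (fun k => rowEnd ν k + k) (pointsAtHeight μ))
          ([], List.range (ν.length + 1))).1 := by
        congr 1
        refine List.foldl_ext _ _ _ fun st k hk => ?_
        rw [assignStage, assignStage, fpos_eq_rowEnd_add (by simpa [Nat.lt_succ_iff] using hk)]
      _ = _ := by
        rw [foldl_assignStage hmono fun k hk =>
          Nat.lt_add_one_of_le (rowEnd_add_le_length (Nat.le_of_lt_add_one hk))]
  rw [bracketOfPath, hassign]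
  rfl

theorem bracket_of_rflush (ν : List Bool) (μ : List Bool) (hμ : IsNuPath ν μ) :
    bracketOfTree ν (Rflush ν μ) = bracketOfPath ν μ := by
  have hlength : ν.length = rowEnd ν (northSteps ν) + northSteps ν := by
    rw [rowEnd_northSteps, length_eq_eastSteps_add_northSteps]
  rw [rflush_eq_flushTree hμ, bracketOfPath_eq_map_bracketEntry, bracketOfTree,
    hμ.flushProfile.ncard_flushTree, hlength]
  refine hμ.flushProfile.inorderHeights_root.map_snd_inorderAux ?_
  rw [List.length_map, List.length_range]
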